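/- Under Independence, Relevance, Monotonicity, and the Double exclusion restriction, the first stage for D∨ satisfies ΔE[D∨|Z] = μ({C1,C2}) + μ({C1,N2}). (Lemma 2.4) -/

import Mathlib

open MeasureTheory ProbabilityTheory

noncomputable section

variable {Ω : Type*} [MeasurableSpace Ω]

/-- Observed first-part treatment: `D1 = D1(1)·Z + D1(0)·(1−Z)`. -/
def obsD1 (Z : Ω → ℝ) (D1 : Bool → Ω → ℝ) (ω : Ω) : ℝ :=
  D1 true ω * Z ω + D1 false ω * (1 - Z ω)

/-- Observed second-part treatment. -/
def obsD2 (Z : Ω → ℝ) (D1 : Bool → Ω → ℝ) (D2 : Bool → Bool → Ω → ℝ) (ω : Ω) : ℝ :=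
  (D2 true true ω * obsD1 Z D1 ω + D2 true false ω * (1 - obsD1 Z D1 ω)) * Z ω +
  (D2 false true ω * obsD1 Z D1 ω + D2 false false ω * (1 - obsD1 Z D1 ω)) * (1 - Z ω)

/-- Summary treatment `D∧ = D1·D2`. -/
def obsDand (Z : Ω → ℝ) (D1 : Bool → Ω → ℝ) (D2 : Bool → Bool → Ω → ℝ) (ω : Ω) : ℝ :=
  obsD1 Z D1 ω * obsD2 Z D1 D2 ω

/-- Summary treatment `D∨ = D1 + D2 − D1·D2`. -/
def obsDor (Z : Ω → ℝ) (D1 : Bool → Ω → ℝ) (D2 : Bool → Bool → Ω → ℝ) (ω : Ω) : ℝ :=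
  obsD1 Z D1 ω + obsD2 Z D1 D2 ω - obsD1 Z D1 ω * obsD2 Z D1 D2 ω

/-- Observed outcome `Y = Σ_{d1,d2} Y(Z,d1,d2)·1{D1=d1, D2=d2}`, written out using that the
observed treatments and the instrument are {0,1}-valued. The first index of `Yp` is `z`, the
second is `d1`, the third is `d2`. -/
def obsY (Z : Ω → ℝ) (D1 : Bool → Ω → ℝ) (D2 : Bool → Bool → Ω → ℝ)
    (Yp : Bool → Bool → Bool → Ω → ℝ) (ω : Ω) : ℝ :=
  (Yp true true true ω * obsD1 Z D1 ω * obsD2 Z D1 D2 ω +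
   Yp true false true ω * (1 - obsD1 Z D1 ω) * obsD2 Z D1 D2 ω +
   Yp true true false ω * obsD1 Z D1 ω * (1 - obsD2 Z D1 D2 ω) +
   Yp true false false ω * (1 - obsD1 Z D1 ω) * (1 - obsD2 Z D1 D2 ω)) * Z ω +
  (Yp false true true ω * obsD1 Z D1 ω * obsD2 Z D1 D2 ω +
   Yp false false true ω * (1 - obsD1 Z D1 ω) * obsD2 Z D1 D2 ω +
   Yp false true false ω * obsD1 Z D1 ω * (1 - obsD2 Z D1 D2 ω) +
   Yp false false false ω * (1 - obsD1 Z D1 ω) * (1 - obsD2 Z D1 D2 ω)) * (1 - Z ω)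

/-- `ΔE[A|Z] := E[A | Z = 1] − E[A | Z = 0]`, expectations under conditional measures. -/
def dE (μ : Measure Ω) (Z A : Ω → ℝ) : ℝ :=
  (∫ ω, A ω ∂(μ[|Z ⁻¹' {1}])) - (∫ ω, A ω ∂(μ[|Z ⁻¹' {0}]))

/-- The full-complier event `{C1,C2}`. -/
def CCev (D1 : Bool → Ω → ℝ) (D2 : Bool → Bool → Ω → ℝ) : Set Ω :=
  {ω | D1 true ω - D1 false ω = 1 ∧ D2 true true ω - D2 false false ω = 1}

/-- The mover event `{C1,N2}`. -/
def CNev (D1 : Bool → Ω → ℝ) (D2 : Bool → Bool → Ω → ℝ) : Set Ω :=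
  {ω | D1 true ω - D1 false ω = 1 ∧ D2 true true ω = 0 ∧ D2 false false ω = 0}

/-- The mover event `{C1,A2}`. -/
def CAev (D1 : Bool → Ω → ℝ) (D2 : Bool → Bool → Ω → ℝ) : Set Ω :=
  {ω | D1 true ω - D1 false ω = 1 ∧ D2 true true ω = 1 ∧ D2 false false ω = 1}

/-- The mover event `{N1,C2}`. -/
def NCev (D1 : Bool → Ω → ℝ) (D2 : Bool → Bool → Ω → ℝ) : Set Ω :=
  {ω | D1 true ω = 0 ∧ D1 false ω = 0 ∧ D2 true false ω - D2 false false ω = 1}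

/-- The mover event `{A1,C2}`. -/
def ACev (D1 : Bool → Ω → ℝ) (D2 : Bool → Bool → Ω → ℝ) : Set Ω :=
  {ω | D1 true ω = 1 ∧ D1 false ω = 1 ∧ D2 true true ω - D2 false true ω = 1}

/-!
Write `D∨(z)` for the value `D∨` takes when the instrument is set to `z`. Independence turns
`ΔE[D∨|Z]` into `E[D∨(1) − D∨(0)]`. Since `D∨(z) = D1(z) + (1 − D1(z))·D2(z,0)`, exclusion gives
`D∨(1) − D∨(0) = (D1(1) − D1(0))·(1 − D2(0,0))`. By monotonicity this is the indicator of the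
first-treatment compliers with `D2(0,0) = 0`, who are `{C1,C2}` or `{C1,N2}` according to
`D2(1,1)`.
-/

section Conditioning

variable {μ : Measure Ω}

theorem identDistrib_cond_of_indepFun [IsFiniteMeasure μ] {β γ : Type*} [MeasurableSpace β]
    [MeasurableSpace γ] {X : Ω → β} {Z : Ω → γ} (hX : AEMeasurable X μ) (hZ : Measurable Z)
    (hXZ : IndepFun X Z μ) {s : Set γ} (hs : MeasurableSet s) (hμs : μ (Z ⁻¹' s) ≠ 0) :
    IdentDistrib X X (μ[|Z ⁻¹' s]) μ where
  aemeasurable_fst := hX.mono_ac cond_absolutelyContinuous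
  aemeasurable_snd := hX
  map_eq := by
    ext t ht
    rw [Measure.map_apply_of_aemeasurable (hX.mono_ac cond_absolutelyContinuous) ht,
      Measure.map_apply_of_aemeasurable hX ht, cond_apply (hZ hs), Set.inter_comm,
      hXZ.measure_inter_preimage_eq_mul _ _ ht hs, mul_comm (μ (X ⁻¹' t)),
      ENNReal.inv_mul_cancel_left hμs (measure_ne_top μ _)]

theorem integral_cond_eq_integral_of_eqOn [IsFiniteMeasure μ] {γ E : Type*} [MeasurableSpace γ]
    [NormedAddCommGroup E] [NormedSpace ℝ E] [MeasurableSpace E] [BorelSpace E] {A X : Ω → E}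
    {Z : Ω → γ} (hX : AEMeasurable X μ) (hZ : Measurable Z) (hXZ : IndepFun X Z μ) {s : Set γ}
    (hs : MeasurableSet s) (hμs : μ (Z ⁻¹' s) ≠ 0) (hAX : Set.EqOn A X (Z ⁻¹' s)) :
    ∫ ω, A ω ∂(μ[|Z ⁻¹' s]) = ∫ ω, X ω ∂μ :=
  (integral_congr_ae (ae_cond_of_forall_mem (hZ hs) hAX)).trans
    (identDistrib_cond_of_indepFun hX hZ hXZ hs hμs).integral_eq

theorem dE_eq_integral_sub_integral [IsFiniteMeasure μ] {Z A A₀ A₁ : Ω → ℝ} (hZ : Measurable Z)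
    (hμ₀ : μ (Z ⁻¹' {0}) ≠ 0) (hμ₁ : μ (Z ⁻¹' {1}) ≠ 0)
    (hA₀ : AEMeasurable A₀ μ) (hA₁ : AEMeasurable A₁ μ)
    (hindep₀ : IndepFun A₀ Z μ) (hindep₁ : IndepFun A₁ Z μ)
    (heq₀ : Set.EqOn A A₀ (Z ⁻¹' {0})) (heq₁ : Set.EqOn A A₁ (Z ⁻¹' {1})) :
    dE μ Z A = ∫ ω, A₁ ω ∂μ - ∫ ω, A₀ ω ∂μ := by
  rw [dE, integral_cond_eq_integral_of_eqOn hA₁ hZ hindep₁ (measurableSet_singleton 1) hμ₁ heq₁,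
    integral_cond_eq_integral_of_eqOn hA₀ hZ hindep₀ (measurableSet_singleton 0) hμ₀ heq₀]

theorem measure_preimage_zero_ne_zero_of_binary [IsProbabilityMeasure μ] {Z : Ω → ℝ}
    (hZ : ∀ᵐ ω ∂μ, Z ω = 0 ∨ Z ω = 1) (hlt : μ (Z ⁻¹' {1}) < 1) : μ (Z ⁻¹' {0}) ≠ 0 := by
  intro h₀
  have hZ₀ : ∀ᵐ ω ∂μ, Z ω ≠ 0 := measure_eq_zero_iff_ae_notMem.mp h₀
  have hZ₁ : Z ⁻¹' {1} =ᵐ[μ] Set.univ := Filter.eventuallyEq_univ.mpr <| by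
    filter_upwards [hZ, hZ₀] with ω h h' using h.resolve_left h'
  exact hlt.ne ((measure_congr hZ₁).trans measure_univ)

end Conditioning

section PotentialTreatments

variable {α : Type*}

/-- The potential second treatment `D2(z, D1(z))`, with the choice of `d1 = D1(z)` encoded
arithmetically as in `obsD2`. -/
def potD2 (D1 : Bool → α → ℝ) (D2 : Bool → Bool → α → ℝ) (z : Bool) (x : α) : ℝ :=
  D2 z true x * D1 z x + D2 z false x * (1 - D1 z x)

/-- The potential summary treatment `D∨(z)`: the value of `D∨` when the instrument is set to `z`.
The domain `α` is arbitrary, so that on the space of pairs `(D1, D2)` this is also the map sending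
the potential treatments to `D∨(z)`. -/
def potDor (D1 : Bool → α → ℝ) (D2 : Bool → Bool → α → ℝ) (z : Bool) (x : α) : ℝ :=
  D1 z x + potD2 D1 D2 z x - D1 z x * potD2 D1 D2 z x

variable {Z : α → ℝ} {D1 : Bool → α → ℝ} {D2 : Bool → Bool → α → ℝ} {z : Bool} {x : α}

theorem potDor_eq_add_mul (h : D1 z x = 0 ∨ D1 z x = 1) :
    potDor D1 D2 z x = D1 z x + (1 - D1 z x) * D2 z false x := by
  rcases h with h | h <;> simp [potDor, potD2, h]

theorem potDor_eq_zero_or_one (h1 : D1 z x = 0 ∨ D1 z x = 1)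
    (h2 : D2 z false x = 0 ∨ D2 z false x = 1) : potDor D1 D2 z x = 0 ∨ potDor D1 D2 z x = 1 := by
  rw [potDor_eq_add_mul h1]
  rcases h1 with h1 | h1 <;> simp [h1, h2]

theorem measurable_potDor [MeasurableSpace α] (h1 : Measurable (D1 z))
    (h2 : ∀ d, Measurable (D2 z d)) : Measurable (potDor D1 D2 z) := by
  unfold potDor potD2
  fun_prop

theorem obsDor_eq_potDor_true (h : Z x = 1) : obsDor Z D1 D2 x = potDor D1 D2 true x := by
  simp [obsDor, obsD2, obsD1, potDor, potD2, h]

theorem obsDor_eq_potDor_false (h : Z x = 0) : obsDor Z D1 D2 x = potDor D1 D2 false x := by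
  simp [obsDor, obsD2, obsD1, potDor, potD2, h]

theorem mem_CCev_union_CNev_iff (htt : D2 true true x = 0 ∨ D2 true true x = 1)
    (hff : D2 false false x = 0 ∨ D2 false false x = 1) :
    x ∈ CCev D1 D2 ∪ CNev D1 D2 ↔ D1 true x - D1 false x = 1 ∧ D2 false false x = 0 := by
  simp only [CCev, CNev, Set.mem_union, Set.mem_ofPred_eq]
  rcases htt with htt | htt <;> rcases hff with hff | hff <;> norm_num [htt, hff]

theorem disjoint_CCev_CNev : Disjoint (CCev D1 D2) (CNev D1 D2) :=
  Set.disjoint_left.mpr fun _ ⟨_, hC⟩ ⟨_, htt, hff⟩ => by norm_num [htt, hff] at hC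

theorem potDor_true_sub_potDor_false (h1 : ∀ z, D1 z x = 0 ∨ D1 z x = 1)
    (hexcl : D2 true false x = D2 false false x) :
    potDor D1 D2 true x - potDor D1 D2 false x
      = (D1 true x - D1 false x) * (1 - D2 false false x) := by
  rw [potDor_eq_add_mul (h1 true), potDor_eq_add_mul (h1 false), hexcl]
  ring

theorem potDor_true_sub_potDor_false_eq_indicator (h1 : ∀ z, D1 z x = 0 ∨ D1 z x = 1)
    (htt : D2 true true x = 0 ∨ D2 true true x = 1)
    (hff : D2 false false x = 0 ∨ D2 false false x = 1) (hmono : D1 false x ≤ D1 true x)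
    (hexcl : D2 true false x = D2 false false x) :
    potDor D1 D2 true x - potDor D1 D2 false x = (CCev D1 D2 ∪ CNev D1 D2).indicator 1 x := by
  classical
  have hcomplier : D1 true x - D1 false x = 0 ∨ D1 true x - D1 false x = 1 := by grind
  rw [potDor_true_sub_potDor_false h1 hexcl, Set.indicator_apply]
  simp only [mem_CCev_union_CNev_iff htt hff]
  rcases hcomplier with hc | hc <;> rcases hff with hff | hff <;> simp [hc, hff]

end PotentialTreatments

section FirstStage

variable {μ : Measure Ω} {Z : Ω → ℝ} {D1 : Bool → Ω → ℝ} {D2 : Bool → Bool → Ω → ℝ}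

theorem indepFun_potDor (hindep : IndepFun (fun ω => (fun b => D1 b ω, fun b b' => D2 b b' ω)) Z μ)
    (z : Bool) : IndepFun (potDor D1 D2 z) Z μ := by
  have hmeas : Measurable (potDor (fun b (p : (Bool → ℝ) × (Bool → Bool → ℝ)) => p.1 b)
      (fun b b' p => p.2 b b') z) :=
    measurable_potDor (by fun_prop) (by fun_prop)
  exact hindep.comp hmeas measurable_id

theorem integrable_potDor [IsFiniteMeasure μ] {z : Bool} (hD1 : Measurable (D1 z))
    (hD2 : ∀ d, Measurable (D2 z d)) (h1 : ∀ᵐ ω ∂μ, D1 z ω = 0 ∨ D1 z ω = 1)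
    (h2 : ∀ᵐ ω ∂μ, D2 z false ω = 0 ∨ D2 z false ω = 1) : Integrable (potDor D1 D2 z) μ := by
  refine .of_bound (measurable_potDor hD1 hD2).aestronglyMeasurable 1 ?_
  filter_upwards [h1, h2] with ω h1 h2
  rcases potDor_eq_zero_or_one h1 h2 with h | h <;> simp [h]

theorem dE_obsDor_eq_integral_sub_integral [IsFiniteMeasure μ] (hZ : Measurable Z)
    (hμ₀ : μ (Z ⁻¹' {0}) ≠ 0) (hμ₁ : μ (Z ⁻¹' {1}) ≠ 0) (hD1 : ∀ z, Measurable (D1 z))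
    (hD2 : ∀ z d, Measurable (D2 z d))
    (hindep : IndepFun (fun ω => (fun b => D1 b ω, fun b b' => D2 b b' ω)) Z μ) :
    dE μ Z (obsDor Z D1 D2) = ∫ ω, potDor D1 D2 true ω ∂μ - ∫ ω, potDor D1 D2 false ω ∂μ :=
  have hmeas (z : Bool) : AEMeasurable (potDor D1 D2 z) μ :=
    (measurable_potDor (hD1 z) (hD2 z)).aemeasurable
  dE_eq_integral_sub_integral hZ hμ₀ hμ₁ (hmeas false) (hmeas true) (indepFun_potDor hindep false)
    (indepFun_potDor hindep true) (fun _ h => obsDor_eq_potDor_false h)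
    fun _ h => obsDor_eq_potDor_true h

theorem measurableSet_CCev (hD1 : ∀ z, Measurable (D1 z)) (htt : Measurable (D2 true true))
    (hff : Measurable (D2 false false)) : MeasurableSet (CCev D1 D2) :=
  (measurableSet_eq_fun ((hD1 true).sub (hD1 false)) measurable_const).inter
    (measurableSet_eq_fun (htt.sub hff) measurable_const)

theorem measurableSet_CNev (hD1 : ∀ z, Measurable (D1 z)) (htt : Measurable (D2 true true))
    (hff : Measurable (D2 false false)) : MeasurableSet (CNev D1 D2) :=
  (measurableSet_eq_fun ((hD1 true).sub (hD1 false)) measurable_const).inter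
    ((htt (measurableSet_singleton 0)).inter (hff (measurableSet_singleton 0)))

theorem stmt_9_general [IsProbabilityMeasure μ]
    (hZmeas : Measurable Z) (hD1meas : ∀ b, Measurable (D1 b))
    (hD2meas : ∀ b b', Measurable (D2 b b'))
    (hZ01 : ∀ᵐ ω ∂μ, Z ω = 0 ∨ Z ω = 1)
    (hZpos : 0 < μ (Z ⁻¹' {1})) (hZlt : μ (Z ⁻¹' {1}) < 1)
    (hD101 : ∀ b, ∀ᵐ ω ∂μ, D1 b ω = 0 ∨ D1 b ω = 1)
    (hD201 : ∀ b b', ∀ᵐ ω ∂μ, D2 b b' ω = 0 ∨ D2 b b' ω = 1)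
    (hindep : IndepFun (fun ω => (fun b => D1 b ω, fun b b' => D2 b b' ω)) Z μ)
    (hmono1 : ∀ᵐ ω ∂μ, D1 false ω ≤ D1 true ω)
    (hexcl : ∀ᵐ ω ∂μ, D2 true false ω = D2 false false ω) :
    dE μ Z (obsDor Z D1 D2) = μ.real (CCev D1 D2) + μ.real (CNev D1 D2) := by
  have hint (z : Bool) : Integrable (potDor D1 D2 z) μ :=
    integrable_potDor (hD1meas z) (hD2meas z) (hD101 z) (hD201 z false)
  have hCC := measurableSet_CCev hD1meas (hD2meas true true) (hD2meas false false)
  have hCN := measurableSet_CNev hD1meas (hD2meas true true) (hD2meas false false)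
  calc dE μ Z (obsDor Z D1 D2)
    _ = ∫ ω, potDor D1 D2 true ω ∂μ - ∫ ω, potDor D1 D2 false ω ∂μ :=
      dE_obsDor_eq_integral_sub_integral hZmeas
        (measure_preimage_zero_ne_zero_of_binary hZ01 hZlt) hZpos.ne' hD1meas hD2meas hindep
    _ = ∫ ω, potDor D1 D2 true ω - potDor D1 D2 false ω ∂μ :=
      (integral_sub (hint true) (hint false)).symm
    _ = ∫ ω, (CCev D1 D2 ∪ CNev D1 D2).indicator 1 ω ∂μ := by
      refine integral_congr_ae ?_
      filter_upwards [ae_all_iff.mpr hD101, hD201 true true, hD201 false false, hmono1, hexcl]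
        with ω h1 htt hff hmono hexcl
      exact potDor_true_sub_potDor_false_eq_indicator h1 htt hff hmono hexcl
    _ = μ.real (CCev D1 D2 ∪ CNev D1 D2) := integral_indicator_one (hCC.union hCN)
    _ = μ.real (CCev D1 D2) + μ.real (CNev D1 D2) := measureReal_union disjoint_CCev_CNev hCN

end FirstStage

theorem stmt_9
    (μ : Measure Ω) [IsProbabilityMeasure μ]
    (Z : Ω → ℝ) (D1 : Bool → Ω → ℝ) (D2 : Bool → Bool → Ω → ℝ)
    (Yp : Bool → Bool → Bool → Ω → ℝ)
    (hZmeas : Measurable Z)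
    (hD1meas : ∀ b, Measurable (D1 b))
    (hD2meas : ∀ b b', Measurable (D2 b b'))
    (hYmeas : ∀ z d1 d2, Measurable (Yp z d1 d2))
    (hYint : ∀ z d1 d2, Integrable (Yp z d1 d2) μ)
    (hZ01 : ∀ ω, Z ω = 0 ∨ Z ω = 1)
    (hZpos : 0 < μ (Z ⁻¹' {1})) (hZlt : μ (Z ⁻¹' {1}) < 1)
    (hD101 : ∀ b ω, D1 b ω = 0 ∨ D1 b ω = 1)
    (hD201 : ∀ b b' ω, D2 b b' ω = 0 ∨ D2 b b' ω = 1)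
    (hindep : IndepFun
      (fun ω => ((fun b => D1 b ω), (fun b b' => D2 b b' ω), (fun z d1 d2 => Yp z d1 d2 ω))) Z μ)
    (hrel1 : 0 < dE μ Z (obsD1 Z D1))
    (hrel2 : 0 < dE μ Z (obsD2 Z D1 D2))
    (hrelAnd : 0 < dE μ Z (obsDand Z D1 D2))
    (hrelOr : 0 < dE μ Z (obsDor Z D1 D2))
    (hmono1 : ∀ᵐ ω ∂μ, D1 false ω ≤ D1 true ω)
    (hmono2 : ∀ᵐ ω ∂μ,
      D2 false true ω * D1 false ω + D2 false false ω * (1 - D1 false ω) ≤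
        D2 true true ω * D1 true ω + D2 true false ω * (1 - D1 true ω))
    (hexcl : ∀ d1 d2, ∀ᵐ ω ∂μ, Yp true d1 d2 ω = Yp false d1 d2 ω)
    (hdexcl : ∀ d1, ∀ᵐ ω ∂μ, D2 true d1 ω = D2 false d1 ω) :
    dE μ Z (obsDor Z D1 D2) = (μ (CCev D1 D2)).toReal + (μ (CNev D1 D2)).toReal :=
  stmt_9_general hZmeas hD1meas hD2meas (.of_forall hZ01) hZpos hZlt (fun b => .of_forall (hD101 b))
    (fun b b' => .of_forall (hD201 b b'))
    (hindep.comp (measurable_fst.prodMk measurable_snd.fst) measurable_id) hmono1 (hdexcl false)
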